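/- Let n, m be positive integers, let α₁, α₂, ω > 0 and κ > 1 be reals, and set ϑ := min{2α₁, 2κ − 2, 2α₂}. Let e_x, z : [0,∞) → ℝⁿ and e_u : [0,∞) → ℝᵐ be differentiable, let r : [0,∞) → ℝ be continuous, and let g : [0,∞) → ℝ^{n×m} and G₂ : [0,∞) → ℝ^{m×n} be continuous matrix-valued functions. Suppose that for all t ≥ 0: (i) ė_x(t) = −(α₁ + r(t)²/2)·e_x(t) − r(t)·z(t) + g(t)·e_u(t); (ii) ė_u(t) = −(α₂ + ‖G₂(t)‖²/2)·e_u(t) − g(t)ᵀ·e_x(t) + G₂(t)·z(t); (iii) the function t ↦ (1/2)‖z(t)‖² is differentiable with derivative at most −κ‖z(t)‖² + ω. Then for all t ≥ 0, ‖e_x(t)‖ ≤ √(2V₂(0)·e^{−ϑt} + 2ω/ϑ), where V₂(0) := (1/2)(‖e_x(0)‖² + ‖z(0)‖² + ‖e_u(0)‖²); in particular the tracking error e_x is globally uniformly ultimately bounded. -/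

import Mathlib

/-- Frobenius norm of a real matrix. -/
noncomputable def frobNorm {n m : ℕ} (B : Matrix (Fin n) (Fin m) ℝ) : ℝ :=
  Real.sqrt (∑ i, ∑ j, (B i j) ^ 2)

/-- Matrix-vector product, with values in Euclidean space. -/
noncomputable def matVec {n m : ℕ} (B : Matrix (Fin n) (Fin m) ℝ)
    (v : EuclideanSpace ℝ (Fin m)) : EuclideanSpace ℝ (Fin n) :=
  WithLp.toLp 2 (fun i => ∑ j, B i j * v j)

/-!
The energy `V₂ = (‖e_x‖² + ‖z‖² + ‖e_u‖²) / 2` satisfies `V₂' ≤ -ϑ V₂ + ω`. The couplings `g e_u`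
and `-gᵀ e_x` exchange energy without producing any, so they cancel in `V₂'`. Each of the two terms
driven by `z` is absorbed by the nonlinear damping of its own channel at the price of `‖z‖² / 2`,
and the decay rate `κ > 1` of `z` pays for both. Grönwall's inequality then bounds `V₂`, hence
`‖e_x‖²`.
-/

section MatVec

variable {n m : ℕ}

theorem norm_matVec_le (B : Matrix (Fin n) (Fin m) ℝ) (v : EuclideanSpace ℝ (Fin m)) :
    ‖matVec B v‖ ≤ frobNorm B * ‖v‖ := by
  have frobNorm_sq : frobNorm B ^ 2 = ∑ i, ∑ j, B i j ^ 2 := Real.sq_sqrt (by positivity)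
  refine le_of_sq_le_sq ?_ (mul_nonneg (Real.sqrt_nonneg _) (norm_nonneg v))
  calc ‖matVec B v‖ ^ 2 = ∑ i, (∑ j, B i j * v j) ^ 2 := EuclideanSpace.real_norm_sq_eq _
    _ ≤ ∑ i, (∑ j, B i j ^ 2) * ∑ j, v j ^ 2 :=
        Finset.sum_le_sum fun i _ => Finset.sum_mul_sq_le_sq_mul_sq _ (B i) v
    _ = (frobNorm B * ‖v‖) ^ 2 := by
        rw [← Finset.sum_mul, mul_pow, frobNorm_sq, EuclideanSpace.real_norm_sq_eq]

theorem matVec_eq_toEuclideanLin (B : Matrix (Fin n) (Fin m) ℝ) (v : EuclideanSpace ℝ (Fin m)) :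
    matVec B v = B.toEuclideanLin v :=
  rfl

theorem inner_matVec_eq_inner_matVec_transpose (B : Matrix (Fin n) (Fin m) ℝ)
    (x : EuclideanSpace ℝ (Fin n)) (u : EuclideanSpace ℝ (Fin m)) :
    inner ℝ x (matVec B u) = inner ℝ u (matVec B.transpose x) := by
  rw [matVec_eq_toEuclideanLin, matVec_eq_toEuclideanLin,
    ← Matrix.conjTranspose_eq_transpose_of_trivial, Matrix.toEuclideanLin_conjTranspose_eq_adjoint,
    LinearMap.adjoint_inner_right, real_inner_comm]

end MatVec

theorem le_mul_exp_add_div_of_hasDerivWithinAt_le {f f' : ℝ → ℝ} {a ϑ ω : ℝ} (hϑ : 0 < ϑ)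
    (hω : 0 ≤ ω) (hf : ∀ t ≥ a, HasDerivWithinAt f (f' t) (Set.Ici a) t)
    (hf' : ∀ t ≥ a, f' t ≤ -ϑ * f t + ω) {t : ℝ} (ht : a ≤ t) :
    f t ≤ f a * Real.exp (-ϑ * (t - a)) + ω / ϑ := by
  have gronwall : f t ≤ gronwallBound (f a) (-ϑ) ω (t - a) :=
    le_gronwallBound_of_liminf_deriv_right_le
      (fun s hs => (hf s hs.1).continuousWithinAt.mono Set.Icc_subset_Ici_self)
      (fun s hs _ => ((hf s hs.1).mono (Set.Ici_subset_Ici.2 hs.1)).liminf_right_slope_le)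
      le_rfl (fun s hs => hf' s hs.1) t ⟨ht, le_rfl⟩
  calc f t ≤ f a * Real.exp (-ϑ * (t - a)) + ω / -ϑ * (Real.exp (-ϑ * (t - a)) - 1) := by
        rwa [gronwallBound_of_K_ne_0 (neg_ne_zero.2 hϑ.ne')] at gronwall
    _ = f a * Real.exp (-ϑ * (t - a)) + ω / ϑ - ω / ϑ * Real.exp (-ϑ * (t - a)) := by
        rw [div_neg]; ring
    _ ≤ f a * Real.exp (-ϑ * (t - a)) + ω / ϑ := sub_le_self _ (by positivity)

section Lyapunov

variable {X Z U : Type*} [Norm X] [Norm Z] [Norm U]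

/-- The Lyapunov function `V₂` of the closed loop, as a function of the tracking error `x`, the
scaled observer error `z` and the input error `u`. -/
noncomputable def lyapunov (x : X) (z : Z) (u : U) : ℝ :=
  (1 / 2) * (‖x‖ ^ 2 + ‖z‖ ^ 2 + ‖u‖ ^ 2)

theorem norm_sq_le_two_mul_lyapunov (x : X) (z : Z) (u : U) :
    ‖x‖ ^ 2 ≤ 2 * lyapunov x z u := by
  unfold lyapunov
  linarith [sq_nonneg ‖z‖, sq_nonneg ‖u‖]

theorem mul_lyapunov_le {ϑ a b c : ℝ} (ha : ϑ ≤ 2 * a) (hb : ϑ ≤ 2 * b) (hc : ϑ ≤ 2 * c)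
    (x : X) (z : Z) (u : U) :
    ϑ * lyapunov x z u ≤ a * ‖x‖ ^ 2 + b * ‖z‖ ^ 2 + c * ‖u‖ ^ 2 := by
  unfold lyapunov
  linarith [mul_le_mul_of_nonneg_right ha (sq_nonneg ‖x‖),
    mul_le_mul_of_nonneg_right hb (sq_nonneg ‖z‖), mul_le_mul_of_nonneg_right hc (sq_nonneg ‖u‖)]

end Lyapunov

section ClosedLoop

open scoped RealInnerProductSpace

variable {X U : Type*} [NormedAddCommGroup X] [InnerProductSpace ℝ X]
  [NormedAddCommGroup U] [InnerProductSpace ℝ U]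

theorem hasDerivWithinAt_lyapunov {Z : Type*} [Norm Z] {x : ℝ → X} {z : ℝ → Z}
    {u : ℝ → U} {x' : X} {ζ' : ℝ} {u' : U} {s : Set ℝ} {t : ℝ} (hx : HasDerivWithinAt x x' s t)
    (hz : HasDerivWithinAt (fun τ => (1 / 2) * ‖z τ‖ ^ 2) ζ' s t)
    (hu : HasDerivWithinAt u u' s t) :
    HasDerivWithinAt (fun τ => lyapunov (x τ) (z τ) (u τ)) (⟪x t, x'⟫ + ζ' + ⟪u t, u'⟫) s t := by
  convert! ((hx.norm_sq.const_mul (1 / 2)).add hz).add (hu.norm_sq.const_mul (1 / 2)) using 1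
  · funext τ
    simp only [lyapunov, Pi.add_apply]
    ring
  · ring

theorem inner_damping_add_le {α γ c : ℝ} {e w : X} (hw : ‖w‖ ≤ γ * c) :
    ⟪e, (-(α + γ ^ 2 / 2)) • e + w⟫ ≤ -α * ‖e‖ ^ 2 + c ^ 2 / 2 := by
  have young : ⟪e, w⟫ ≤ γ ^ 2 / 2 * ‖e‖ ^ 2 + c ^ 2 / 2 :=
    calc ⟪e, w⟫ ≤ ‖e‖ * ‖w‖ := real_inner_le_norm e w
      _ ≤ ‖e‖ * (γ * c) := by gcongr
      _ ≤ γ ^ 2 / 2 * ‖e‖ ^ 2 + c ^ 2 / 2 := by linarith [two_mul_le_add_sq (γ * ‖e‖) c]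
  rw [inner_add_right, real_inner_smul_right, real_inner_self_eq_norm_sq]
  linarith

theorem inner_damping_add_inner_damping_le {α₁ α₂ r γ : ℝ} {x z p : X} {u q w : U}
    (hpq : ⟪x, p⟫ ≤ ⟪u, q⟫) (hw : ‖w‖ ≤ γ * ‖z‖) :
    ⟪x, (-(α₁ + r ^ 2 / 2)) • x - r • z + p⟫ + ⟪u, (-(α₂ + γ ^ 2 / 2)) • u - q + w⟫ ≤
      -α₁ * ‖x‖ ^ 2 + ‖z‖ ^ 2 - α₂ * ‖u‖ ^ 2 := by
  have x_channel : ⟪x, (-(α₁ + r ^ 2 / 2)) • x + -(r • z)⟫ ≤ -α₁ * ‖x‖ ^ 2 + ‖z‖ ^ 2 / 2 := by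
    rw [← sq_abs r]
    exact inner_damping_add_le (by rw [norm_neg, norm_smul, Real.norm_eq_abs])
  have u_channel : ⟪u, (-(α₂ + γ ^ 2 / 2)) • u + w⟫ ≤ -α₂ * ‖u‖ ^ 2 + ‖z‖ ^ 2 / 2 :=
    inner_damping_add_le hw
  rw [sub_eq_add_neg, inner_add_right, sub_add_eq_add_sub, inner_sub_right]
  linarith

-- The couplings are arbitrary signals: `p = g e_u` and `q = gᵀ e_x` enter only through the
-- passivity inequality `hpq`, and `w = G₂ z` only through a bound `γ` on its gain.
theorem stmt4_general {α₁ α₂ ω κ ϑ : ℝ} (hα₁ : 0 < α₁) (hα₂ : 0 < α₂) (hω : 0 ≤ ω) (hκ : 1 < κ)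
    (hϑ : ϑ = min (2 * α₁) (min (2 * κ - 2) (2 * α₂)))
    {ex z p : ℝ → X} {eu q w : ℝ → U} {r γ V' : ℝ → ℝ}
    (hex : ∀ t ≥ (0 : ℝ), HasDerivWithinAt ex
      ((-(α₁ + r t ^ 2 / 2)) • ex t - r t • z t + p t) (Set.Ici 0) t)
    (heu : ∀ t ≥ (0 : ℝ), HasDerivWithinAt eu
      ((-(α₂ + γ t ^ 2 / 2)) • eu t - q t + w t) (Set.Ici 0) t)
    (hpq : ∀ t ≥ (0 : ℝ), ⟪ex t, p t⟫ ≤ ⟪eu t, q t⟫)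
    (hw : ∀ t ≥ (0 : ℝ), ‖w t‖ ≤ γ t * ‖z t‖)
    (hz : ∀ t ≥ (0 : ℝ), HasDerivWithinAt (fun s => (1 / 2) * ‖z s‖ ^ 2) (V' t) (Set.Ici 0) t)
    (hV' : ∀ t ≥ (0 : ℝ), V' t ≤ -κ * ‖z t‖ ^ 2 + ω) {t : ℝ} (ht : 0 ≤ t) :
    ‖ex t‖ ≤ √(2 * lyapunov (ex 0) (z 0) (eu 0) * Real.exp (-ϑ * t) + 2 * ω / ϑ) := by
  have hϑ_pos : 0 < ϑ := by
    rw [hϑ]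
    exact lt_min (by linarith) (lt_min (by linarith) (by linarith))
  obtain ⟨hϑ₁, hϑκ, hϑ₂⟩ : ϑ ≤ 2 * α₁ ∧ ϑ ≤ 2 * κ - 2 ∧ ϑ ≤ 2 * α₂ := by
    simpa only [le_min_iff] using hϑ.le
  have dissipation (s : ℝ) (hs : s ≥ 0) : ⟪ex s, (-(α₁ + r s ^ 2 / 2)) • ex s - r s • z s + p s⟫ +
      V' s + ⟪eu s, (-(α₂ + γ s ^ 2 / 2)) • eu s - q s + w s⟫ ≤
      -ϑ * lyapunov (ex s) (z s) (eu s) + ω := by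
    have channels := inner_damping_add_inner_damping_le (α₁ := α₁) (α₂ := α₂) (r := r s)
      (hpq s hs) (hw s hs)
    have rate : ϑ * lyapunov (ex s) (z s) (eu s) ≤
        α₁ * ‖ex s‖ ^ 2 + (κ - 1) * ‖z s‖ ^ 2 + α₂ * ‖eu s‖ ^ 2 :=
      mul_lyapunov_le hϑ₁ (by linarith) hϑ₂ _ _ _
    linarith [hV' s hs]
  have decay := le_mul_exp_add_div_of_hasDerivWithinAt_le hϑ_pos hω
    (fun s hs => hasDerivWithinAt_lyapunov (hex s hs) (hz s hs) (heu s hs)) dissipation ht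
  rw [sub_zero] at decay
  apply Real.le_sqrt_of_sq_le
  calc ‖ex t‖ ^ 2 ≤ 2 * lyapunov (ex t) (z t) (eu t) := norm_sq_le_two_mul_lyapunov _ _ _
    _ ≤ 2 * (lyapunov (ex 0) (z 0) (eu 0) * Real.exp (-ϑ * t) + ω / ϑ) := by gcongr
    _ = 2 * lyapunov (ex 0) (z 0) (eu 0) * Real.exp (-ϑ * t) + 2 * ω / ϑ := by ring

end ClosedLoop

/-- Proposition 1 of the paper, error-dynamics form: the tracking error
`e_x` of the IIDOB-based tracking controller is globally uniformly ultimately bounded. -/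
theorem stmt4 (n m : ℕ) (hn : 0 < n) (hm : 0 < m)
    (α₁ α₂ ω κ : ℝ) (hα₁ : 0 < α₁) (hα₂ : 0 < α₂) (hω : 0 < ω) (hκ : 1 < κ)
    (ϑ : ℝ) (hϑ : ϑ = min (2 * α₁) (min (2 * κ - 2) (2 * α₂)))
    (ex z : ℝ → EuclideanSpace ℝ (Fin n)) (eu : ℝ → EuclideanSpace ℝ (Fin m))
    (r : ℝ → ℝ) (hr : ContinuousOn r (Set.Ici (0 : ℝ)))
    (g : ℝ → Matrix (Fin n) (Fin m) ℝ) (hg : ContinuousOn g (Set.Ici (0 : ℝ)))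
    (G₂ : ℝ → Matrix (Fin m) (Fin n) ℝ) (hG₂ : ContinuousOn G₂ (Set.Ici (0 : ℝ)))
    -- (i) tracking-error dynamics:
    (hex : ∀ t ≥ (0 : ℝ), HasDerivAt ex
      ((-(α₁ + (r t) ^ 2 / 2)) • ex t - r t • z t + matVec (g t) (eu t)) t)
    -- (ii) input-error dynamics:
    (heu : ∀ t ≥ (0 : ℝ), HasDerivAt eu
      ((-(α₂ + (frobNorm (G₂ t)) ^ 2 / 2)) • eu t - matVec (g t).transpose (ex t)
        + matVec (G₂ t) (z t)) t)
    -- (iii) Lyapunov decay of the scaled estimation error: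
    (V' : ℝ → ℝ)
    (hzdiff : ∀ t ≥ (0 : ℝ), HasDerivAt (fun s => (1 / 2) * ‖z s‖ ^ 2) (V' t) t)
    (hV' : ∀ t ≥ (0 : ℝ), V' t ≤ -κ * ‖z t‖ ^ 2 + ω)
    (V₂0 : ℝ) (hV₂0 : V₂0 = (1 / 2) * (‖ex 0‖ ^ 2 + ‖z 0‖ ^ 2 + ‖eu 0‖ ^ 2)) :
    ∀ t ≥ (0 : ℝ),
      ‖ex t‖ ≤ Real.sqrt (2 * V₂0 * Real.exp (-ϑ * t) + 2 * ω / ϑ) := by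
  subst hV₂0
  exact fun t ht => stmt4_general hα₁ hα₂ hω.le hκ hϑ (fun s hs => (hex s hs).hasDerivWithinAt)
    (fun s hs => (heu s hs).hasDerivWithinAt)
    (fun s _ => (inner_matVec_eq_inner_matVec_transpose (g s) (ex s) (eu s)).le)
    (fun s _ => norm_matVec_le (G₂ s) (z s)) (fun s hs => (hzdiff s hs).hasDerivWithinAt) hV' ht
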